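/- Let 0 < γ < 1. There is no constant c > 0 such that for every n ∈ ℕ, every f : C_n → ℝ with E f = 0, and every t ≥ 0, one has ‖e^{tΔ_γ} f‖₁ ≤ e^{−c t} ‖f‖₁. Equivalently: for every c > 0 there exist n ∈ ℕ, a function f : C_n → ℝ with E f = 0, and a time t > 0 such that ‖e^{tΔ_γ} f‖₁ > e^{−c t} ‖f‖₁. -/

import Mathlib

open Finset MeasureTheory Real

noncomputable section

/-- Expectation on the Hamming cube `{-1,1}^n`, modeled as `Fin n → Bool`
(`true ↔ 1`, `false ↔ -1`), with the uniform probability measure. -/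
def cubeE {n : ℕ} (f : (Fin n → Bool) → ℝ) : ℝ :=
  (∑ x : Fin n → Bool, f x) / 2 ^ n

/-- The Walsh monomial `x^S = ∏_{i ∈ S} x_i`. -/
def walsh {n : ℕ} (S : Finset (Fin n)) (x : Fin n → Bool) : ℝ :=
  ∏ i ∈ S, (if x i then (1 : ℝ) else -1)

/-- Fourier coefficient `f̂(S) = E (f · x^S)`. -/
def cubeFourier {n : ℕ} (f : (Fin n → Bool) → ℝ) (S : Finset (Fin n)) : ℝ :=
  cubeE fun x => f x * walsh S x

/-- The heat semigroup `e^{tΔ} f = Σ_S e^{-t|S|} f̂(S) x^S`. -/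
def heat1 {n : ℕ} (t : ℝ) (f : (Fin n → Bool) → ℝ) : (Fin n → Bool) → ℝ :=
  fun x => ∑ S : Finset (Fin n), Real.exp (-t * (S.card : ℝ)) * cubeFourier f S * walsh S x

/-- The fractional heat semigroup `e^{tΔ_γ} f = Σ_S e^{-t|S|^γ} f̂(S) x^S`. -/
def heatFrac {n : ℕ} (γ t : ℝ) (f : (Fin n → Bool) → ℝ) : (Fin n → Bool) → ℝ :=
  fun x => ∑ S : Finset (Fin n), Real.exp (-t * (S.card : ℝ) ^ γ) * cubeFourier f S * walsh S x

/-- The Laplacian `Δf = -Σ_S |S| f̂(S) x^S`. -/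
def lap {n : ℕ} (f : (Fin n → Bool) → ℝ) : (Fin n → Bool) → ℝ :=
  fun x => -∑ S : Finset (Fin n), (S.card : ℝ) * cubeFourier f S * walsh S x

/-- The fractional Laplacian `Δ_γ f = -Σ_S |S|^γ f̂(S) x^S`. -/
def fracLap {n : ℕ} (γ : ℝ) (f : (Fin n → Bool) → ℝ) : (Fin n → Bool) → ℝ :=
  fun x => -∑ S : Finset (Fin n), (S.card : ℝ) ^ γ * cubeFourier f S * walsh S x

/-- The discrete partial derivative `∇_j f`. -/
def cubeGrad {n : ℕ} (j : Fin n) (f : (Fin n → Bool) → ℝ) (x : Fin n → Bool) : ℝ :=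
  (f (Function.update x j true) - f (Function.update x j false)) / 2

/-- The squared length of the discrete gradient, `|∇f|²(x) = Σ_j |∇_j f(x)|²`. -/
def gradSq {n : ℕ} (f : (Fin n → Bool) → ℝ) (x : Fin n → Bool) : ℝ :=
  ∑ j : Fin n, (cubeGrad j f x) ^ 2

/-- The `L^p` norm `‖f‖_p = (E|f|^p)^{1/p}` on the Hamming cube. -/
def pNorm {n : ℕ} (p : ℝ) (f : (Fin n → Bool) → ℝ) : ℝ :=
  (cubeE fun x => |f x| ^ p) ^ (1 / p)

/-!
Suppose there were a spectral gap `c`. Integrating over `t` bounds `(-Δ_γ)⁻¹` on mean-zero functions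
by `1 / c` in `L¹`, uniformly in `n`. On the other hand `Γ(γ) (-Δ_γ)⁻¹ = ∫₀^∞ s^{γ-1} e^{sΔ} ds`.
Apply this to `f = δ_y - δ_{-y}`: the function `e^{sΔ} f` is a difference of two product
densities, its sign at a point does not depend on `s`, so no cancellation occurs in the `s`-integral
and `Γ(γ) ‖(-Δ_γ)⁻¹ f‖₁ = ∫₀^∞ s^{γ-1} ‖e^{sΔ} f‖₁ ds`. By the Hellinger bound on the distance of
two product measures, `‖e^{sΔ} f‖₁ ≥ 2 - 2 (1 - e^{-2s})^{n/2}`, which is at least `1` on any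
prescribed interval `(0, R]` once `n` is large. Hence `R^γ / γ ≤ 2 Γ(γ) / c` for every `R`,
which is absurd.
-/

section Expectation

variable {n : ℕ}

lemma cubeE_mono {f g : (Fin n → Bool) → ℝ} (h : ∀ x, f x ≤ g x) : cubeE f ≤ cubeE g :=
  div_le_div_of_nonneg_right (sum_le_sum fun x _ => h x) (by positivity)

lemma cubeE_add (f g : (Fin n → Bool) → ℝ) :
    cubeE (fun x => f x + g x) = cubeE f + cubeE g := by
  simp only [cubeE, sum_add_distrib, add_div]

lemma cubeE_sub (f g : (Fin n → Bool) → ℝ) :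
    cubeE (fun x => f x - g x) = cubeE f - cubeE g := by
  simp only [cubeE, sum_sub_distrib, sub_div]

lemma cubeE_const_mul (a : ℝ) (f : (Fin n → Bool) → ℝ) :
    cubeE (fun x => a * f x) = a * cubeE f := by
  simp only [cubeE, ← mul_sum, mul_div_assoc]

lemma cubeE_const (a : ℝ) : cubeE (fun _ : Fin n → Bool => a) = a := by
  simp [cubeE]

lemma cubeE_sum {ι : Type*} (s : Finset ι) (F : ι → (Fin n → Bool) → ℝ) :
    cubeE (fun x => ∑ i ∈ s, F i x) = ∑ i ∈ s, cubeE (F i) := by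
  simp only [cubeE]
  rw [sum_comm, sum_div]

lemma integrable_cubeE {α : Type*} [MeasurableSpace α] {μ : Measure α}
    {F : α → (Fin n → Bool) → ℝ} (hF : ∀ x, Integrable (fun a => F a x) μ) :
    Integrable (fun a => cubeE (F a)) μ :=
  (integrable_finsetSum _ fun x _ => hF x).div_const _

lemma integral_cubeE {α : Type*} [MeasurableSpace α] {μ : Measure α}
    {F : α → (Fin n → Bool) → ℝ} (hF : ∀ x, Integrable (fun a => F a x) μ) :
    ∫ a, cubeE (F a) ∂μ = cubeE fun x => ∫ a, F a x ∂μ := by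
  simp only [cubeE, integral_div, integral_finsetSum _ fun x _ => hF x]

end Expectation

section LOneNorm

variable {n : ℕ}

lemma pNorm_one (f : (Fin n → Bool) → ℝ) : pNorm 1 f = cubeE fun x => |f x| := by
  simp only [pNorm, rpow_one, div_one]

lemma pNorm_one_nonneg (f : (Fin n → Bool) → ℝ) : 0 ≤ pNorm 1 f := by
  rw [pNorm_one, cubeE]
  positivity

lemma pNorm_one_const_mul {a : ℝ} (ha : 0 ≤ a) (f : (Fin n → Bool) → ℝ) :
    pNorm 1 (fun x => a * f x) = a * pNorm 1 f := by
  simp only [pNorm_one, abs_mul, abs_of_nonneg ha, cubeE_const_mul]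

lemma pNorm_one_sub_le (f g : (Fin n → Bool) → ℝ) :
    pNorm 1 (fun x => f x - g x) ≤ pNorm 1 f + pNorm 1 g := by
  simp only [pNorm_one, ← cubeE_add]
  exact cubeE_mono fun x => abs_sub (f x) (g x)

variable {α : Type*} [MeasurableSpace α] {μ : Measure α} {F : α → (Fin n → Bool) → ℝ}

lemma integrable_pNorm_one (hF : ∀ x, Integrable (fun a => F a x) μ) :
    Integrable (fun a => pNorm 1 (F a)) μ := by
  simp only [pNorm_one]
  exact integrable_cubeE fun x => (hF x).abs

lemma pNorm_one_integral_le (hF : ∀ x, Integrable (fun a => F a x) μ) :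
    pNorm 1 (fun x => ∫ a, F a x ∂μ) ≤ ∫ a, pNorm 1 (F a) ∂μ := by
  simp only [pNorm_one]
  rw [integral_cubeE fun x => (hF x).abs]
  exact cubeE_mono fun x => abs_integral_le_integral_abs

lemma integral_pNorm_one_of_sign (hF : ∀ x, Integrable (fun a => F a x) μ)
    (hsign : ∀ x, (∀ᵐ a ∂μ, 0 ≤ F a x) ∨ ∀ᵐ a ∂μ, F a x ≤ 0) :
    ∫ a, pNorm 1 (F a) ∂μ = pNorm 1 fun x => ∫ a, F a x ∂μ := by
  simp only [pNorm_one]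
  rw [integral_cubeE fun x => (hF x).abs]
  congr 1 with x
  rcases hsign x with hpos | hneg
  · rw [abs_of_nonneg (integral_nonneg_of_ae hpos)]
    exact integral_congr_ae (hpos.mono fun a ha => abs_of_nonneg ha)
  · rw [abs_of_nonpos (integral_nonpos_of_ae hneg), ← integral_neg]
    exact integral_congr_ae (hneg.mono fun a ha => abs_of_nonpos ha)

end LOneNorm

section WalshMultiplier

variable {n : ℕ}

/-- The radial Fourier multiplier `f ↦ Σ_S m(|S|) f̂(S) x^S` with symbol `m`, a common form for
`heat1`, `heatFrac` and `fracLapInv`. -/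
def walshMultiplier (m : ℕ → ℝ) (f : (Fin n → Bool) → ℝ) : (Fin n → Bool) → ℝ :=
  fun x => ∑ S : Finset (Fin n), m S.card * cubeFourier f S * walsh S x

lemma heat1_eq (t : ℝ) (f : (Fin n → Bool) → ℝ) :
    heat1 t f = walshMultiplier (fun k => exp (-t * k)) f := rfl

lemma heatFrac_eq (γ t : ℝ) (f : (Fin n → Bool) → ℝ) :
    heatFrac γ t f = walshMultiplier (fun k => exp (-t * (k : ℝ) ^ γ)) f := rfl

lemma cubeFourier_empty (f : (Fin n → Bool) → ℝ) : cubeFourier f ∅ = cubeE f := by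
  simp [cubeFourier, walsh]

lemma cubeFourier_sub (f g : (Fin n → Bool) → ℝ) (S : Finset (Fin n)) :
    cubeFourier (fun x => f x - g x) S = cubeFourier f S - cubeFourier g S := by
  simp only [cubeFourier, sub_mul, cubeE_sub]

lemma walshMultiplier_sub (m : ℕ → ℝ) (f g : (Fin n → Bool) → ℝ) (x : Fin n → Bool) :
    walshMultiplier m (fun x => f x - g x) x = walshMultiplier m f x - walshMultiplier m g x := by
  simp only [walshMultiplier, cubeFourier_sub, mul_sub, sub_mul, sum_sub_distrib]

lemma cubeE_walsh (S : Finset (Fin n)) : cubeE (walsh S) = if S = ∅ then 1 else 0 := by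
  have hfactor : ∑ x, walsh S x =
      ∏ i : Fin n, ∑ b : Bool, if i ∈ S then (if b then (1 : ℝ) else -1) else 1 := by
    rw [prod_univ_sum, Fintype.piFinset_univ]
    simp only [walsh, prod_ite_mem, univ_inter]
  rcases S.eq_empty_or_nonempty with rfl | ⟨i, hi⟩
  · simp [cubeE, walsh]
  · rw [cubeE, hfactor, prod_eq_zero (mem_univ i) (by simp [hi]), zero_div,
      if_neg (ne_empty_of_mem hi)]

lemma cubeE_walshMultiplier (m : ℕ → ℝ) (f : (Fin n → Bool) → ℝ) :
    cubeE (walshMultiplier m f) = m 0 * cubeE f := by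
  unfold walshMultiplier
  simp only [cubeE_sum, cubeE_const_mul, cubeE_walsh, mul_ite, mul_one, mul_zero,
    sum_ite_eq', mem_univ, if_true, card_empty, cubeFourier_empty]

lemma const_mul_walshMultiplier (a : ℝ) (m : ℕ → ℝ) (f : (Fin n → Bool) → ℝ)
    (x : Fin n → Bool) :
    a * walshMultiplier m f x = walshMultiplier (fun k => a * m k) f x := by
  simp only [walshMultiplier, mul_sum, mul_assoc]

variable {f : (Fin n → Bool) → ℝ}

lemma walshMultiplier_congr {m m' : ℕ → ℝ} (hf : cubeE f = 0) (h : ∀ k ≠ 0, m k = m' k) :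
    walshMultiplier m f = walshMultiplier m' f := by
  funext x
  refine sum_congr rfl fun S _ => ?_
  rcases S.eq_empty_or_nonempty with rfl | hS
  · simp only [cubeFourier_empty, hf, mul_zero]
  · rw [h _ hS.card_ne_zero]

variable {α : Type*} [MeasurableSpace α] {μ : Measure α} {m : α → ℕ → ℝ}

lemma integrable_walshMultiplier_term (hf : cubeE f = 0)
    (hm : ∀ k ≠ 0, Integrable (fun a => m a k) μ) (S : Finset (Fin n)) (x : Fin n → Bool) :
    Integrable (fun a => m a S.card * cubeFourier f S * walsh S x) μ := by
  rcases S.eq_empty_or_nonempty with rfl | hS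
  · simp [cubeFourier_empty, hf]
  · exact ((hm _ hS.card_ne_zero).mul_const _).mul_const _

lemma integrable_walshMultiplier (hf : cubeE f = 0)
    (hm : ∀ k ≠ 0, Integrable (fun a => m a k) μ) (x : Fin n → Bool) :
    Integrable (fun a => walshMultiplier (m a) f x) μ :=
  integrable_finsetSum _ fun S _ => integrable_walshMultiplier_term hf hm S x

lemma integral_walshMultiplier (hf : cubeE f = 0)
    (hm : ∀ k ≠ 0, Integrable (fun a => m a k) μ) (x : Fin n → Bool) :
    ∫ a, walshMultiplier (m a) f x ∂μ = walshMultiplier (fun k => ∫ a, m a k ∂μ) f x := by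
  simp only [walshMultiplier]
  rw [integral_finsetSum _ fun S _ => integrable_walshMultiplier_term hf hm S x]
  simp only [integral_mul_const]

end WalshMultiplier

section FracLapInv

variable {n : ℕ} {f : (Fin n → Bool) → ℝ} {γ : ℝ}

/-- The inverse `(-Δ_γ)⁻¹` of the fractional Laplacian on mean-zero functions. -/
def fracLapInv (γ : ℝ) (f : (Fin n → Bool) → ℝ) : (Fin n → Bool) → ℝ :=
  walshMultiplier (fun k => 1 / (k : ℝ) ^ γ) f

lemma integrableOn_exp_neg_mul {a : ℝ} (ha : 0 < a) :
    IntegrableOn (fun t => exp (-t * a)) (Set.Ioi 0) := by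
  simpa only [neg_mul, mul_comm a] using integrableOn_exp_mul_Ioi (neg_lt_zero.2 ha) 0

lemma integral_exp_neg_mul {a : ℝ} (ha : 0 < a) :
    ∫ t in Set.Ioi (0 : ℝ), exp (-t * a) = 1 / a := by
  have h := integral_exp_mul_Ioi (neg_lt_zero.2 ha) 0
  rw [mul_zero, exp_zero, neg_div_neg_eq] at h
  simpa only [neg_mul, mul_comm a] using h

lemma integrableOn_heatFrac (γ : ℝ) (hf : cubeE f = 0) (x : Fin n → Bool) :
    IntegrableOn (fun t => heatFrac γ t f x) (Set.Ioi 0) := by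
  simp only [heatFrac_eq]
  exact integrable_walshMultiplier hf (fun _ _ => integrableOn_exp_neg_mul (by positivity)) x

lemma integral_heatFrac (γ : ℝ) (hf : cubeE f = 0) (x : Fin n → Bool) :
    ∫ t in Set.Ioi 0, heatFrac γ t f x = fracLapInv γ f x := by
  simp only [heatFrac_eq, fracLapInv]
  rw [integral_walshMultiplier hf fun _ _ => integrableOn_exp_neg_mul (by positivity),
    walshMultiplier_congr hf fun _ _ => integral_exp_neg_mul (by positivity)]

lemma pNorm_one_fracLapInv_le {c M : ℝ} (hf : cubeE f = 0) (hc : 0 < c)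
    (hdecay : ∀ t, 0 ≤ t → pNorm 1 (heatFrac γ t f) ≤ exp (-c * t) * M) :
    pNorm 1 (fracLapInv γ f) ≤ M / c :=
  calc pNorm 1 (fracLapInv γ f)
      = pNorm 1 fun x => ∫ t in Set.Ioi 0, heatFrac γ t f x := by simp only [integral_heatFrac γ hf]
    _ ≤ ∫ t in Set.Ioi 0, pNorm 1 (heatFrac γ t f) :=
        pNorm_one_integral_le (integrableOn_heatFrac γ hf)
    _ ≤ ∫ t in Set.Ioi 0, exp (-c * t) * M :=
        setIntegral_mono_on (integrable_pNorm_one (integrableOn_heatFrac γ hf))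
          ((integrableOn_exp_mul_Ioi (neg_lt_zero.2 hc) 0).mul_const M) measurableSet_Ioi
          fun t ht => hdecay t (le_of_lt ht)
    _ = M / c := by
        rw [integral_mul_const, integral_exp_mul_Ioi (neg_lt_zero.2 hc), mul_zero, exp_zero,
          neg_div_neg_eq, one_div_mul_eq_div]

lemma integrableOn_rpow_mul_exp_neg_mul (hγ : 0 < γ) {a : ℝ} (ha : 0 < a) :
    IntegrableOn (fun s : ℝ => s ^ (γ - 1) * exp (-s * a)) (Set.Ioi 0) := by
  have h := integrableOn_rpow_mul_exp_neg_mul_rpow (s := γ - 1) (by linarith) one_pos ha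
  simpa only [rpow_one, neg_mul, mul_comm a] using h

lemma integral_rpow_mul_exp_neg_mul (hγ : 0 < γ) {a : ℝ} (ha : 0 < a) :
    ∫ s in Set.Ioi (0 : ℝ), s ^ (γ - 1) * exp (-s * a) = Gamma γ * (1 / a ^ γ) := by
  have h := integral_rpow_mul_exp_neg_mul_Ioi hγ ha
  rw [div_rpow zero_le_one ha.le, one_rpow, mul_comm _ (Gamma γ)] at h
  simpa only [neg_mul, mul_comm a] using h

lemma integrableOn_rpow_mul_heat1 (hγ : 0 < γ) (hf : cubeE f = 0) (x : Fin n → Bool) :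
    IntegrableOn (fun s => s ^ (γ - 1) * heat1 s f x) (Set.Ioi 0) := by
  simp only [heat1_eq, const_mul_walshMultiplier]
  exact integrable_walshMultiplier hf
    (fun _ _ => integrableOn_rpow_mul_exp_neg_mul hγ (by positivity)) x

lemma integral_rpow_mul_heat1 (hγ : 0 < γ) (hf : cubeE f = 0) (x : Fin n → Bool) :
    ∫ s in Set.Ioi 0, s ^ (γ - 1) * heat1 s f x = Gamma γ * fracLapInv γ f x := by
  simp only [heat1_eq, fracLapInv, const_mul_walshMultiplier]
  rw [integral_walshMultiplier hf
      fun _ _ => integrableOn_rpow_mul_exp_neg_mul hγ (by positivity),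
    walshMultiplier_congr hf fun _ _ => integral_rpow_mul_exp_neg_mul hγ (by positivity)]

lemma integrableOn_rpow_mul_pNorm_one_heat1 (hγ : 0 < γ) (hf : cubeE f = 0) :
    IntegrableOn (fun s => s ^ (γ - 1) * pNorm 1 (heat1 s f)) (Set.Ioi 0) :=
  IntegrableOn.congr_fun (integrable_pNorm_one (integrableOn_rpow_mul_heat1 hγ hf))
    (fun _ hs => pNorm_one_const_mul (rpow_nonneg (le_of_lt hs) _) _) measurableSet_Ioi

lemma integral_rpow_mul_pNorm_one_heat1 (hγ : 0 < γ) (hf : cubeE f = 0)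
    (hsign : ∀ x, (∀ s > 0, 0 ≤ heat1 s f x) ∨ ∀ s > 0, heat1 s f x ≤ 0) :
    ∫ s in Set.Ioi 0, s ^ (γ - 1) * pNorm 1 (heat1 s f) =
      Gamma γ * pNorm 1 (fracLapInv γ f) := by
  have hweight : ∀ s ∈ Set.Ioi (0 : ℝ), 0 ≤ s ^ (γ - 1) := fun s hs => rpow_nonneg (le_of_lt hs) _
  calc ∫ s in Set.Ioi 0, s ^ (γ - 1) * pNorm 1 (heat1 s f)
      = ∫ s in Set.Ioi 0, pNorm 1 fun x => s ^ (γ - 1) * heat1 s f x :=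
        setIntegral_congr_fun measurableSet_Ioi fun s hs =>
          (pNorm_one_const_mul (hweight s hs) _).symm
    _ = pNorm 1 fun x => ∫ s in Set.Ioi 0, s ^ (γ - 1) * heat1 s f x :=
        integral_pNorm_one_of_sign (integrableOn_rpow_mul_heat1 hγ hf) fun x =>
          (hsign x).imp
            (fun h => ae_restrict_of_forall_mem measurableSet_Ioi fun s hs =>
              mul_nonneg (hweight s hs) (h s hs))
            (fun h => ae_restrict_of_forall_mem measurableSet_Ioi fun s hs =>
              mul_nonpos_of_nonneg_of_nonpos (hweight s hs) (h s hs))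
    _ = Gamma γ * pNorm 1 (fracLapInv γ f) := by
        simp only [integral_rpow_mul_heat1 hγ hf, pNorm_one_const_mul (Gamma_pos_of_pos hγ).le]

lemma rpow_div_le_integral_rpow_mul_pNorm_one_heat1 {R : ℝ} (hγ : 0 < γ) (hR : 0 ≤ R)
    (hf : cubeE f = 0) (hlower : ∀ s ∈ Set.Ioc 0 R, 1 ≤ pNorm 1 (heat1 s f)) :
    R ^ γ / γ ≤ ∫ s in Set.Ioi 0, s ^ (γ - 1) * pNorm 1 (heat1 s f) := by
  have hweight : ∀ s ∈ Set.Ioi (0 : ℝ), 0 ≤ s ^ (γ - 1) := fun s hs => rpow_nonneg (le_of_lt hs) _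
  have hint_weight : IntegrableOn (fun s : ℝ => s ^ (γ - 1)) (Set.Ioc 0 R) :=
    (intervalIntegrable_iff_integrableOn_Ioc_of_le hR).1
      (intervalIntegral.intervalIntegrable_rpow' (by linarith))
  have hint := integrableOn_rpow_mul_pNorm_one_heat1 hγ hf
  calc R ^ γ / γ = ∫ s in Set.Ioc 0 R, s ^ (γ - 1) := by
        rw [← intervalIntegral.integral_of_le hR, integral_rpow (Or.inl (by linarith)),
          sub_add_cancel, zero_rpow hγ.ne', sub_zero]
    _ ≤ ∫ s in Set.Ioc 0 R, s ^ (γ - 1) * pNorm 1 (heat1 s f) :=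
        setIntegral_mono_on hint_weight (hint.mono_set Set.Ioc_subset_Ioi_self)
          measurableSet_Ioc fun s hs => le_mul_of_one_le_right (hweight s hs.1) (hlower s hs)
    _ ≤ ∫ s in Set.Ioi 0, s ^ (γ - 1) * pNorm 1 (heat1 s f) :=
        setIntegral_mono_set hint
          (ae_restrict_of_forall_mem measurableSet_Ioi fun s hs =>
            mul_nonneg (hweight s hs) (pNorm_one_nonneg _))
          Set.Ioc_subset_Ioi_self.eventuallyLE

end FracLapInv

section HeatKernel

variable {n : ℕ}

/-- The density with respect to the uniform measure of the point mass at `y`. -/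
def pointMass (y : Fin n → Bool) : (Fin n → Bool) → ℝ :=
  fun x => if x = y then 2 ^ n else 0

lemma cubeE_pointMass_mul (y : Fin n → Bool) (h : (Fin n → Bool) → ℝ) :
    cubeE (fun x => pointMass y x * h x) = h y := by
  simp [cubeE, pointMass, ite_mul]

lemma cubeE_pointMass (y : Fin n → Bool) : cubeE (pointMass y) = 1 := by
  simpa using cubeE_pointMass_mul y fun _ => 1

lemma cubeFourier_pointMass (y : Fin n → Bool) (S : Finset (Fin n)) :
    cubeFourier (pointMass y) S = walsh S y :=
  cubeE_pointMass_mul y (walsh S)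

lemma pointMass_nonneg (y x : Fin n → Bool) : 0 ≤ pointMass y x := by
  unfold pointMass; positivity

lemma pNorm_one_pointMass (y : Fin n → Bool) : pNorm 1 (pointMass y) = 1 := by
  simp only [pNorm_one, abs_of_nonneg (pointMass_nonneg y _), cubeE_pointMass]

lemma hammingDist_compl_right (x y : Fin n → Bool) : hammingDist x yᶜ = #{i | x i = y i} := by
  simp [hammingDist]

lemma hammingDist_add_hammingDist_compl (x y : Fin n → Bool) :
    hammingDist x y + hammingDist x yᶜ = n := by
  rw [hammingDist_compl_right, hammingDist, add_comm, card_filter_add_card_filter_not, card_univ,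
    Fintype.card_fin]

lemma sum_pow_card_mul_walsh_mul_walsh (r : ℝ) (x y : Fin n → Bool) :
    ∑ S : Finset (Fin n), r ^ #S * walsh S y * walsh S x =
      (1 + r) ^ hammingDist x yᶜ * (1 - r) ^ hammingDist x y :=
  calc ∑ S : Finset (Fin n), r ^ #S * walsh S y * walsh S x
      = ∑ S : Finset (Fin n), ∏ i ∈ S,
          r * (if y i then (1 : ℝ) else -1) * (if x i then (1 : ℝ) else -1) := by
        simp only [walsh, prod_mul_distrib, prod_const]
    _ = ∏ i, (1 + r * (if y i then (1 : ℝ) else -1) * (if x i then (1 : ℝ) else -1)) := by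
        rw [prod_one_add, powerset_univ]
    _ = ∏ i, if x i = y i then 1 + r else 1 - r := by
        refine prod_congr rfl fun i _ => ?_
        cases x i <;> cases y i <;> simp [sub_eq_add_neg]
    _ = (1 + r) ^ hammingDist x yᶜ * (1 - r) ^ hammingDist x y := by
        rw [prod_ite, prod_const, prod_const, hammingDist_compl_right, hammingDist]

lemma heat1_pointMass (t : ℝ) (x y : Fin n → Bool) :
    heat1 t (pointMass y) x =
      (1 + exp (-t)) ^ hammingDist x yᶜ * (1 - exp (-t)) ^ hammingDist x y := by
  simp only [heat1, cubeFourier_pointMass, ← sum_pow_card_mul_walsh_mul_walsh, ← exp_nat_mul,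
    mul_comm (-t)]

lemma heat1_pointMass_nonneg {t : ℝ} (ht : 0 ≤ t) (x y : Fin n → Bool) :
    0 ≤ heat1 t (pointMass y) x := by
  have h : 0 ≤ 1 - exp (-t) := sub_nonneg.2 (exp_le_one_iff.2 (neg_nonpos.2 ht))
  rw [heat1_pointMass]
  positivity

lemma cubeE_heat1_pointMass (t : ℝ) (y : Fin n → Bool) : cubeE (heat1 t (pointMass y)) = 1 := by
  rw [heat1_eq, cubeE_walshMultiplier, cubeE_pointMass, Nat.cast_zero, mul_zero, exp_zero, mul_one]

lemma heat1_pointMass_mul_heat1_pointMass_compl (t : ℝ) (x y : Fin n → Bool) :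
    heat1 t (pointMass y) x * heat1 t (pointMass yᶜ) x = (1 - exp (-t) ^ 2) ^ n := by
  calc heat1 t (pointMass y) x * heat1 t (pointMass yᶜ) x
      = (1 - exp (-t) ^ 2) ^ (hammingDist x y + hammingDist x yᶜ) := by
        rw [heat1_pointMass, heat1_pointMass, compl_compl,
          show 1 - exp (-t) ^ 2 = (1 + exp (-t)) * (1 - exp (-t)) by ring, mul_pow, pow_add,
          pow_add]
        ring
    _ = (1 - exp (-t) ^ 2) ^ n := by rw [hammingDist_add_hammingDist_compl]

lemma heat1_pointMass_compl_le {t : ℝ} (ht : 0 ≤ t) {x y : Fin n → Bool}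
    (hxy : hammingDist x y ≤ hammingDist x yᶜ) :
    heat1 t (pointMass yᶜ) x ≤ heat1 t (pointMass y) x := by
  have hr : 0 ≤ 1 - exp (-t) := sub_nonneg.2 (exp_le_one_iff.2 (neg_nonpos.2 ht))
  have hr' : 1 - exp (-t) ≤ 1 + exp (-t) := by linarith [exp_pos (-t)]
  obtain ⟨k, hk⟩ := Nat.exists_eq_add_of_le hxy
  rw [heat1_pointMass, heat1_pointMass, compl_compl, hk]
  generalize hammingDist x y = d
  calc (1 + exp (-t)) ^ d * (1 - exp (-t)) ^ (d + k)
      = (1 + exp (-t)) ^ d * (1 - exp (-t)) ^ d * (1 - exp (-t)) ^ k := by ring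
    _ ≤ (1 + exp (-t)) ^ d * (1 - exp (-t)) ^ d * (1 + exp (-t)) ^ k := by gcongr
    _ = (1 + exp (-t)) ^ (d + k) * (1 - exp (-t)) ^ d := by ring

end HeatKernel

lemma add_sub_two_mul_sqrt_mul_le_abs_sub {p q : ℝ} (hp : 0 ≤ p) (hq : 0 ≤ q) :
    p + q - 2 * √(p * q) ≤ |p - q| := by
  have hmin : min p q ≤ √(p * q) := by
    refine le_sqrt_of_sq_le ?_
    rw [← min_mul_max, sq]
    gcongr
    exact min_le_max
  linarith [max_sub_min_eq_abs' p q, min_add_max p q]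

section AntipodalDipole

variable {n : ℕ}

/-- The mean-zero function `δ_y - δ_{-y}`, the test function that rules out a spectral gap. The
complement `yᶜ` in `Fin n → Bool` is the antipode of `y`. -/
def antipodalDipole (y : Fin n → Bool) : (Fin n → Bool) → ℝ :=
  fun x => pointMass y x - pointMass yᶜ x

lemma cubeE_antipodalDipole (y : Fin n → Bool) : cubeE (antipodalDipole y) = 0 := by
  unfold antipodalDipole
  rw [cubeE_sub, cubeE_pointMass, cubeE_pointMass, sub_self]

lemma pNorm_one_antipodalDipole_le (y : Fin n → Bool) : pNorm 1 (antipodalDipole y) ≤ 2 :=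
  (pNorm_one_sub_le _ _).trans_eq (by simp only [pNorm_one_pointMass]; norm_num)

lemma heat1_antipodalDipole (t : ℝ) (x y : Fin n → Bool) :
    heat1 t (antipodalDipole y) x = heat1 t (pointMass y) x - heat1 t (pointMass yᶜ) x := by
  simp only [heat1_eq]
  exact walshMultiplier_sub _ _ _ x

lemma heat1_antipodalDipole_sign (x y : Fin n → Bool) :
    (∀ t > 0, 0 ≤ heat1 t (antipodalDipole y) x) ∨
      ∀ t > 0, heat1 t (antipodalDipole y) x ≤ 0 := by
  simp only [heat1_antipodalDipole, sub_nonneg, sub_nonpos]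
  refine (le_total (hammingDist x y) (hammingDist x yᶜ)).imp (fun h t ht => ?_) fun h t ht => ?_
  · exact heat1_pointMass_compl_le ht.le h
  · simpa only [compl_compl] using
      heat1_pointMass_compl_le ht.le (y := yᶜ) (by rwa [compl_compl])

lemma two_sub_sqrt_le_pNorm_one_heat1_antipodalDipole {t : ℝ} (ht : 0 ≤ t) (y : Fin n → Bool) :
    2 - 2 * √((1 - exp (-t) ^ 2) ^ n) ≤ pNorm 1 (heat1 t (antipodalDipole y)) :=
  calc 2 - 2 * √((1 - exp (-t) ^ 2) ^ n)
      = cubeE fun x => heat1 t (pointMass y) x + heat1 t (pointMass yᶜ) x -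
          2 * √((1 - exp (-t) ^ 2) ^ n) := by
        rw [cubeE_sub, cubeE_add, cubeE_heat1_pointMass, cubeE_heat1_pointMass, cubeE_const,
          one_add_one_eq_two]
    _ ≤ cubeE fun x => |heat1 t (pointMass y) x - heat1 t (pointMass yᶜ) x| :=
        cubeE_mono fun x => by
          rw [← heat1_pointMass_mul_heat1_pointMass_compl t x y]
          exact add_sub_two_mul_sqrt_mul_le_abs_sub (heat1_pointMass_nonneg ht x y)
            (heat1_pointMass_nonneg ht x yᶜ)
    _ = pNorm 1 (heat1 t (antipodalDipole y)) := by simp only [pNorm_one, heat1_antipodalDipole]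

lemma exists_forall_one_le_pNorm_one_heat1_antipodalDipole (R : ℝ) :
    ∃ n : ℕ, ∀ y : Fin n → Bool, ∀ t ∈ Set.Ioc 0 R,
      1 ≤ pNorm 1 (heat1 t (antipodalDipole y)) := by
  have hlt : 1 - exp (-R) ^ 2 < 1 := sub_lt_self 1 (by positivity)
  obtain ⟨n, hn⟩ := exists_pow_lt_of_lt_one (show (0 : ℝ) < (1 / 2) ^ 2 by norm_num) hlt
  refine ⟨n, fun y t ht => ?_⟩
  have hbase : 0 ≤ 1 - exp (-t) ^ 2 :=
    sub_nonneg.2 (pow_le_one₀ (exp_pos _).le (exp_le_one_iff.2 (neg_nonpos.2 ht.1.le)))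
  have hpow : (1 - exp (-t) ^ 2) ^ n ≤ (1 / 2) ^ 2 :=
    le_trans (by gcongr; exact ht.2) hn.le
  have hsqrt : √((1 - exp (-t) ^ 2) ^ n) ≤ 1 / 2 := sqrt_le_iff.2 ⟨by norm_num, hpow⟩
  linarith [two_sub_sqrt_le_pNorm_one_heat1_antipodalDipole ht.1.le y]

end AntipodalDipole

lemma exists_mul_pNorm_one_lt_pNorm_one_fracLapInv {γ : ℝ} (hγ : 0 < γ) (C : ℝ) :
    ∃ (n : ℕ) (f : (Fin n → Bool) → ℝ),
      cubeE f = 0 ∧ C * pNorm 1 f < pNorm 1 (fracLapInv γ f) := by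
  have hΓ : 0 < Gamma γ := Gamma_pos_of_pos hγ
  obtain ⟨R, hlarge, hR⟩ := (((tendsto_rpow_atTop hγ).eventually_gt_atTop
    (Gamma γ * (|C| * 2) * γ)).and (Filter.eventually_ge_atTop 0)).exists
  obtain ⟨n, hn⟩ := exists_forall_one_le_pNorm_one_heat1_antipodalDipole R
  let f : (Fin n → Bool) → ℝ := antipodalDipole ⊤
  have hf : cubeE f = 0 := cubeE_antipodalDipole ⊤
  refine ⟨n, f, hf, lt_of_mul_lt_mul_left ?_ hΓ.le⟩
  calc Gamma γ * (C * pNorm 1 f) ≤ Gamma γ * (|C| * 2) := by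
        gcongr
        exacts [pNorm_one_nonneg f, le_abs_self C, pNorm_one_antipodalDipole_le ⊤]
    _ < R ^ γ / γ := (lt_div_iff₀ hγ).2 hlarge
    _ ≤ ∫ s in Set.Ioi 0, s ^ (γ - 1) * pNorm 1 (heat1 s f) :=
        rpow_div_le_integral_rpow_mul_pNorm_one_heat1 hγ hR hf (hn ⊤)
    _ = Gamma γ * pNorm 1 (fracLapInv γ f) :=
        integral_rpow_mul_pNorm_one_heat1 hγ hf (heat1_antipodalDipole_sign · ⊤)

theorem stmt18_general (γ : ℝ) (hγ0 : 0 < γ) :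
    ¬ ∃ c : ℝ, 0 < c ∧
        ∀ (n : ℕ) (f : (Fin n → Bool) → ℝ), cubeE f = 0 →
          ∀ t : ℝ, 0 ≤ t → pNorm 1 (heatFrac γ t f) ≤ Real.exp (-c * t) * pNorm 1 f := by
  rintro ⟨c, hc, hdecay⟩
  obtain ⟨n, f, hf, hlarge⟩ := exists_mul_pNorm_one_lt_pNorm_one_fracLapInv hγ0 (1 / c)
  have hbound : pNorm 1 (fracLapInv γ f) ≤ pNorm 1 f / c :=
    pNorm_one_fracLapInv_le hf hc (hdecay n f hf)
  exact hlarge.not_ge (hbound.trans_eq (one_div_mul_eq_div c _).symm)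

/-- There is no uniform (dimension-free) `L¹` spectral gap for the fractional
heat semigroup, `0 < γ < 1`: no `c > 0` satisfies
`‖e^{tΔ_γ} f‖₁ ≤ e^{-ct} ‖f‖₁` for every `n`, every `f : C_n → ℝ` with
`E f = 0`, and every `t ≥ 0`. -/
theorem stmt18 (γ : ℝ) (hγ0 : 0 < γ) (hγ1 : γ < 1) :
    ¬ ∃ c : ℝ, 0 < c ∧
        ∀ (n : ℕ) (f : (Fin n → Bool) → ℝ), cubeE f = 0 →
          ∀ t : ℝ, 0 ≤ t → pNorm 1 (heatFrac γ t f) ≤ Real.exp (-c * t) * pNorm 1 f :=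
  stmt18_general γ hγ0
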